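/- arXiv:1101.4713 — 2 statements merged into one kernel-verified Lean document; each statement's English description precedes it below -/
import Mathlib

section
/- Let B ∈ M_d(ℤ) with det B ≠ 0, let i, j, k, l ∈ ℕ satisfy i ≥ l and k + i − l = j, and let m, n, p, q ∈ ℤ^d. Then the following are equivalent: (1) there exists x ∈ ℤ^d with p − n = B^l x and m + B^k x − q ∈ B^j ℤ^d; (2) there exists y ∈ ℤ^d with q − m = B^k y and p − B^l y − n ∈ B^i ℤ^d. -/
/-- Let `B ∈ M_d(ℤ)` with `det B ≠ 0`, let `i, j, k, l ∈ ℕ` satisfy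
`i ≥ l` and `k + i - l = j`, and let `m, n, p, q ∈ ℤ^d`.  Then
`(∃ x, p - n = B^l x ∧ m + B^k x - q ∈ B^j ℤ^d)` if and only if
`(∃ y, q - m = B^k y ∧ p - B^l y - n ∈ B^i ℤ^d)`. -/
theorem coset_conditions_equivalent {d : ℕ} (B : Matrix (Fin d) (Fin d) ℤ)
    (hB : B.det ≠ 0) (i j k l : ℕ) (hil : l ≤ i) (hj : k + i - l = j)
    (m n p q : Fin d → ℤ) :
    (∃ x : Fin d → ℤ, p - n = (B ^ l).mulVec x ∧
        ∃ x' : Fin d → ℤ, m + (B ^ k).mulVec x - q = (B ^ j).mulVec x') ↔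
      (∃ y : Fin d → ℤ, q - m = (B ^ k).mulVec y ∧
        ∃ y' : Fin d → ℤ, p - (B ^ l).mulVec y - n = (B ^ i).mulVec y') := by
  obtain ⟨e, rfl⟩ := Nat.exists_eq_add_of_le hil
  obtain rfl : j = k + e := by omega
  -- With `i = l + e` and `j = k + e`, the two sides correspond under `x = y + B ^ e y'`, `x' = y'`.
  constructor
  · rintro ⟨x, hx, x', hx'⟩
    refine ⟨x - (B ^ e).mulVec x', ?_, x', ?_⟩
    · rw [pow_add, ← Matrix.mulVec_mulVec] at hx'
      rw [Matrix.mulVec_sub, ← hx']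
      abel
    · rw [pow_add, ← Matrix.mulVec_mulVec, Matrix.mulVec_sub, ← hx]
      abel
  · rintro ⟨y, hy, y', hy'⟩
    refine ⟨y + (B ^ e).mulVec y', ?_, y', ?_⟩
    · rw [pow_add, ← Matrix.mulVec_mulVec] at hy'
      rw [Matrix.mulVec_add, ← hy']
      abel
    · rw [pow_add, ← Matrix.mulVec_mulVec, Matrix.mulVec_add, ← hy]
      abel
end

section
/- Let A ∈ M_d(ℤ) with det A ≠ 0, set B = Aᵀ, and fix r ∈ [0, 1). Suppose μ and ν are Borel probability measures on 𝕋^d such that for every m ∈ ℤ^d, Σ_{j ≥ 0, m ∈ B^jℤ^d} r^j M_μ(B^{−j}m) = Σ_{j ≥ 0, m ∈ B^jℤ^d} r^j M_ν(B^{−j}m), where the (absolutely convergent) sums run over those j ∈ ℕ for which m lies in B^jℤ^d and B^{−j}m denotes the unique x ∈ ℤ^d with m = B^j x. Then μ = ν. -/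
/-!
Write `S_μ(m)` for the weighted sum attached to `m`. The pairs `(j, x)` with `B^j x = m` consist
of `(0, m)` and of the pairs `(j + 1, x)` with `B^{j+1} x = m`. If `m` is not in `B ℤ^d`, only the
first one occurs and `S_μ(m) = M_μ(m)`. If `m = B n`, then injectivity of `B` identifies the others
with the pairs attached to `n`, so that `S_μ(m) = M_μ(m) + r S_μ(n)`. In both cases `M_μ(m)` can be
recovered from `S_μ`, so `μ` and `ν` have the same moments
(`tsum_fiber_of_notMem_range`, `tsum_fiber_mulVec`). Trigonometric polynomials are dense in
`C(𝕋^d, ℂ)`, hence the moments determine the measure (`measure_ext_of_moments`).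
-/

open MeasureTheory

noncomputable section

/-- The `d`-torus `𝕋^d = ℝ^d / ℤ^d`. -/
abbrev Torus (d : ℕ) := Fin d → AddCircle (1 : ℝ)

/-- The character `γ_m (x + ℤ^d) = exp (2 π i ⟨m, x⟩)` of the `d`-torus. -/
def gammaChar {d : ℕ} (m : Fin d → ℤ) (x : Torus d) : ℂ :=
  ∏ j, (AddCircle.toCircle (m j • x j) : ℂ)

lemma norm_gammaChar {d : ℕ} (m : Fin d → ℤ) (x : Torus d) : ‖gammaChar m x‖ = 1 := by
  rw [gammaChar, norm_prod]
  exact Finset.prod_eq_one fun j _ => Circle.norm_coe _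

lemma norm_moment_le {d : ℕ} (μ : Measure (Torus d)) [IsProbabilityMeasure μ] (m : Fin d → ℤ) :
    ‖∫ z, gammaChar m z ∂μ‖ ≤ 1 := by
  have h := norm_integral_le_of_norm_le_const (μ := μ) (f := gammaChar m) (C := 1)
    (Filter.Eventually.of_forall fun x => (norm_gammaChar m x).le)
  simpa using h

lemma continuous_integral_continuousMap {d : ℕ} (μ : Measure (Torus d)) [IsProbabilityMeasure μ] :
    Continuous fun f : C(Torus d, ℂ) => ∫ x, f x ∂μ := by
  have hint : ∀ f : C(Torus d, ℂ), Integrable (fun x => f x) μ := fun f =>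
    f.continuous.integrable_of_hasCompactSupport (HasCompactSupport.of_compactSpace _)
  refine LipschitzWith.continuous (K := 1) (LipschitzWith.of_dist_le_mul fun f g => ?_)
  rw [dist_eq_norm, dist_eq_norm, ← integral_sub (hint f) (hint g)]
  have h := norm_integral_le_of_norm_le_const (μ := μ) (f := fun x => f x - g x) (C := ‖f - g‖)
    (Filter.Eventually.of_forall fun x => (f - g).norm_coe_le_norm x)
  simpa using h

lemma measure_ext_of_moments {d : ℕ} (μ ν : Measure (Torus d))
    [IsProbabilityMeasure μ] [IsProbabilityMeasure ν]
    (h : ∀ m : Fin d → ℤ, ∫ z, gammaChar m z ∂μ = ∫ z, gammaChar m z ∂ν) : μ = ν := by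
  have hint : ∀ (ρ : Measure (Torus d)) [IsProbabilityMeasure ρ] (f : C(Torus d, ℂ)),
      Integrable (fun x => f x) ρ := fun ρ _ f =>
    f.continuous.integrable_of_hasCompactSupport (HasCompactSupport.of_compactSpace _)
  let S : Submodule ℂ C(Torus d, ℂ) :=
    { carrier := {f | ∫ x, f x ∂μ = ∫ x, f x ∂ν}
      add_mem' := by
        intro f g hf hg
        simp only [Set.mem_ofPred_eq, ContinuousMap.add_apply] at *
        rw [integral_add (hint μ f) (hint μ g), integral_add (hint ν f) (hint ν g), hf, hg]
      zero_mem' := by simp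
      smul_mem' := by
        intro c f hf
        simp only [Set.mem_ofPred_eq, ContinuousMap.smul_apply] at *
        rw [integral_smul, integral_smul, hf] }
  have hclosed : IsClosed (S : Set C(Torus d, ℂ)) :=
    isClosed_eq (continuous_integral_continuousMap μ) (continuous_integral_continuousMap ν)
  have hspan : Submodule.span ℂ (Set.range (UnitAddTorus.mFourier (d := Fin d))) ≤ S := by
    rw [Submodule.span_le]
    rintro _ ⟨n, rfl⟩
    exact h n
  have htop : ∀ f : C(Torus d, ℂ), f ∈ S := fun f =>
    Submodule.topologicalClosure_minimal _ hspan hclosed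
      (by rw [UnitAddTorus.span_mFourier_closure_eq_top]; trivial)
  refine ext_of_forall_integral_eq_of_IsFiniteMeasure fun f => ?_
  have hf : ∫ x, ((f x : ℝ) : ℂ) ∂μ = ∫ x, ((f x : ℝ) : ℂ) ∂ν :=
    htop ⟨fun x => ((f x : ℝ) : ℂ), by fun_prop⟩
  rw [integral_complex_ofReal, integral_complex_ofReal] at hf
  exact_mod_cast hf

section Fiber

variable {d : ℕ} {B : Matrix (Fin d) (Fin d) ℤ}

lemma mulVec_pow_injective (hB : Function.Injective B.mulVec) (j : ℕ) :
    Function.Injective (B ^ j).mulVec := by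
  induction j with
  | zero => intro x y h; simpa using h
  | succ j ih =>
    intro x y h
    simp only [pow_succ', ← Matrix.mulVec_mulVec] at h
    exact ih (hB h)

lemma summable_fiber (hB : Function.Injective B.mulVec) {r : ℝ} (hr : r ∈ Set.Ico (0 : ℝ) 1)
    {f : (Fin d → ℤ) → ℂ} (hf : ∀ x, ‖f x‖ ≤ 1) (m : Fin d → ℤ) :
    Summable fun p : {p : ℕ × (Fin d → ℤ) // m = (B ^ p.1).mulVec p.2} =>
      (r : ℂ) ^ p.1.1 * f p.1.2 := by
  -- Since the powers of `B` are injective, a pair in the fibre is determined by its exponent.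
  have hinj : Function.Injective
      fun p : {p : ℕ × (Fin d → ℤ) // m = (B ^ p.1).mulVec p.2} => p.1.1 := by
    rintro ⟨⟨j, x⟩, hx⟩ ⟨⟨k, y⟩, hy⟩ (rfl : j = k)
    have : x = y := mulVec_pow_injective hB j (hx.symm.trans hy)
    subst this
    rfl
  refine Summable.of_norm_bounded
    ((summable_geometric_of_lt_one hr.1 hr.2).comp_injective hinj) fun p => ?_
  simp only [norm_mul, norm_pow, Complex.norm_real, Real.norm_eq_abs, abs_of_nonneg hr.1,
    Function.comp_apply]
  exact mul_le_of_le_one_right (pow_nonneg hr.1 _) (hf _)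

lemma tsum_fiber_of_notMem_range (r : ℝ) (f : (Fin d → ℤ) → ℂ) {m : Fin d → ℤ}
    (hm : m ∉ Set.range B.mulVec) :
    ∑' p : {p : ℕ × (Fin d → ℤ) // m = (B ^ p.1).mulVec p.2}, (r : ℂ) ^ p.1.1 * f p.1.2
      = f m := by
  rw [tsum_eq_single ⟨(0, m), by simp⟩]
  · simp
  · rintro ⟨⟨j, x⟩, hx⟩ hne
    rcases j with _ | j
    · obtain rfl : m = x := by simpa using hx
      exact absurd rfl hne
    · simp only [pow_succ', ← Matrix.mulVec_mulVec] at hx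
      exact absurd ⟨_, hx.symm⟩ hm

lemma tsum_fiber_mulVec (hB : Function.Injective B.mulVec) {r : ℝ}
    (hr : r ∈ Set.Ico (0 : ℝ) 1) {f : (Fin d → ℤ) → ℂ} (hf : ∀ x, ‖f x‖ ≤ 1)
    (n : Fin d → ℤ) :
    ∑' p : {p : ℕ × (Fin d → ℤ) // B.mulVec n = (B ^ p.1).mulVec p.2},
        (r : ℂ) ^ p.1.1 * f p.1.2
      = f (B.mulVec n) + r * ∑' p : {p : ℕ × (Fin d → ℤ) // n = (B ^ p.1).mulVec p.2},
        (r : ℂ) ^ p.1.1 * f p.1.2 := by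
  classical
  let i : {p : ℕ × (Fin d → ℤ) // n = (B ^ p.1).mulVec p.2} →
      {p : ℕ × (Fin d → ℤ) // B.mulVec n = (B ^ p.1).mulVec p.2} :=
    fun p => ⟨(p.1.1 + 1, p.1.2), by
      rw [pow_succ', ← Matrix.mulVec_mulVec, ← p.2]⟩
  have hi : Function.Injective i := by
    rintro ⟨⟨j, x⟩, hx⟩ ⟨⟨k, y⟩, hy⟩ h
    simpa [i] using h
  rw [(summable_fiber hB hr hf (B.mulVec n)).tsum_eq_add_tsum_ite ⟨(0, B.mulVec n), by simp⟩,
    ← hi.tsum_eq, ← tsum_mul_left]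
  · congr 1
    · simp
    · refine tsum_congr fun p => ?_
      simp [i, pow_succ']
      ring
  · rintro ⟨⟨j, x⟩, hx⟩ hne
    rcases j with _ | j
    · obtain rfl : B.mulVec n = x := by simpa using hx
      simp at hne
    · simp only [pow_succ', ← Matrix.mulVec_mulVec] at hx
      exact ⟨⟨(j, x), hB hx⟩, rfl⟩

end Fiber

/-- Let `A ∈ M_d(ℤ)` with `det A ≠ 0`, `B = Aᵀ`, and fix `r ∈ [0, 1)`.
If `μ` and `ν` are Borel probability measures on `𝕋^d` such that for every `m ∈ ℤ^d` the sums
`Σ_{j ≥ 0, m ∈ B^j ℤ^d} r^j M_μ(B^{-j} m)` and `Σ_{j ≥ 0, m ∈ B^j ℤ^d} r^j M_ν(B^{-j} m)`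
agree (here the sum runs over pairs `(j, x)` with `m = B^j x`; since `det B ≠ 0` the
preimage `x = B^{-j} m` is unique for each admissible `j`), then `μ = ν`. -/
theorem measures_determined_by_weighted_moments {d : ℕ}
    (A : Matrix (Fin d) (Fin d) ℤ) (hA : A.det ≠ 0) (r : ℝ) (hr : r ∈ Set.Ico (0 : ℝ) 1)
    (μ ν : Measure (Torus d)) [IsProbabilityMeasure μ] [IsProbabilityMeasure ν]
    (H : ∀ m : Fin d → ℤ,
      (∑' p : {p : ℕ × (Fin d → ℤ) // m = (A.transpose ^ p.1).mulVec p.2},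
          (r : ℂ) ^ p.1.1 * ∫ z, gammaChar p.1.2 z ∂μ)
        = ∑' p : {p : ℕ × (Fin d → ℤ) // m = (A.transpose ^ p.1).mulVec p.2},
            (r : ℂ) ^ p.1.1 * ∫ z, gammaChar p.1.2 z ∂ν) :
    μ = ν := by
  have hB : Function.Injective A.transpose.mulVec :=
    Matrix.mulVec_injective_of_det_ne_zero (by rwa [Matrix.det_transpose])
  refine measure_ext_of_moments μ ν fun m => ?_
  by_cases hm : m ∈ Set.range A.transpose.mulVec
  · obtain ⟨n, rfl⟩ := hm
    have h := H (A.transpose.mulVec n)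
    rw [tsum_fiber_mulVec hB hr (norm_moment_le μ) n,
      tsum_fiber_mulVec hB hr (norm_moment_le ν) n, H n] at h
    exact add_right_cancel h
  · have h := H m
    rwa [tsum_fiber_of_notMem_range r (fun x => ∫ z, gammaChar x z ∂μ) hm,
      tsum_fiber_of_notMem_range r (fun x => ∫ z, gammaChar x z ∂ν) hm] at h
end
end
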